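/- Let r₀ > 0 and let φ be a C² real-valued function on the unit circle, transported to the circle of radius r₀+ε for each ε ∈ (0,1] by θ ↦ φ(cos θ, sin θ). For each ε ∈ (0,1], let u_ε be the solution of the insulated conductivity problem on the annulus {x ∈ ℝ² : r₀ < |x| < r₀+ε}: u_ε is harmonic on the open annulus, C¹ up to the closed annulus, ⟨∇u_ε(x), x/|x|⟩ = 0 for |x| = r₀, and u_ε((r₀+ε)(cos θ, sin θ)) = φ(cos θ, sin θ) for all θ. Then there exists a constant C > 0, depending only on r₀ and φ but not on ε, such that |∇u_ε(x)| ≤ C for every ε ∈ (0,1] and every x in the open annulus. -/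

import Mathlib

open MeasureTheory Metric Set
open scoped InnerProductSpace

/-- The Laplacian of `f : ℝ^d → ℝ` at `x`, as the sum of the pure second
partial derivatives in the coordinate directions. -/
noncomputable def laplacian {d : ℕ} (f : EuclideanSpace ℝ (Fin d) → ℝ)
    (x : EuclideanSpace ℝ (Fin d)) : ℝ :=
  ∑ i : Fin d,
    iteratedFDeriv ℝ 2 f x ![EuclideanSpace.single i 1, EuclideanSpace.single i 1]

/-- `f` is harmonic on the open set `U ⊆ ℝ^d`: it is `C²` there and its
Laplacian vanishes on `U`. -/
def HarmonicOnSet {d : ℕ} (f : EuclideanSpace ℝ (Fin d) → ℝ)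
    (U : Set (EuclideanSpace ℝ (Fin d))) : Prop :=
  ContDiffOn ℝ 2 f U ∧ ∀ x ∈ U, laplacian f x = 0

/-- The point `(cos θ, sin θ)` on the unit circle in `ℝ²`. -/
noncomputable def dir (θ : ℝ) : EuclideanSpace ℝ (Fin 2) :=
  (EuclideanSpace.equiv (Fin 2) ℝ).symm ![Real.cos θ, Real.sin θ]

/-- The polar angle of `x ∈ ℝ²`. -/
noncomputable def ang (x : EuclideanSpace ℝ (Fin 2)) : ℝ :=
  Complex.arg ((x 0 : ℂ) + (x 1 : ℂ) * Complex.I)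

open Filter Topology
open scoped NNReal Real

/-! In logarithmic polar coordinates `x = exp (s + i t)`, which are conformal, the insulated problem
becomes the Laplace equation `W_ss + W_tt = 0` on a strip, with `W` periodic in `t` and `W_s = 0` on
the left side. The problem is invariant under translations in `t`, so by the maximum principle the
Lipschitz constant `M₁` and the second difference bound `M₂` of the values on the right side hold on
every vertical line. Hence `|W_t| ≤ M₁` and `|W_ss| = |W_tt| ≤ M₂`, and integrating from the
insulated side gives `|W_s| ≤ M₂ (s - log r₀)`. Since `‖x‖ ‖∇u‖ ≤ |W_s| + |W_t|`, the gradient bound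
follows, the factor `‖x‖` absorbing the growth of `s = log ‖x‖`. -/

section SecondDerivative

lemma iteratedDeriv_two_nonpos_of_isLocalMax {f : ℝ → ℝ} {x : ℝ} (hmax : IsLocalMax f x)
    (hf : ContinuousAt f x) : iteratedDeriv 2 f x ≤ 0 := by
  rw [iteratedDeriv_succ, iteratedDeriv_one]
  by_contra! hpos
  -- The second derivative test also makes `x` a local minimum, so `f` is locally constant.
  have hmin : IsLocalMin f x := isLocalMin_of_deriv_deriv_pos hpos hmax.deriv_eq_zero hf
  have hconst : f =ᶠ[𝓝 x] fun _ => f x := by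
    filter_upwards [hmax, hmin] with y hle hge using le_antisymm hle hge
  have hzero : deriv (deriv f) x = 0 := by simpa using hconst.deriv.deriv_eq
  exact hpos.ne' hzero

lemma nonpos_of_hasDerivWithinAt_left_of_isMaxOn {f : ℝ → ℝ} {a b c : ℝ} (hab : a < b)
    (hf : HasDerivWithinAt f c (Icc a b) a) (hmax : IsMaxOn f (Icc a b) a) : c ≤ 0 := by
  have hcone : b - a ∈ posTangentConeAt (Icc a b) a :=
    sub_mem_posTangentConeAt_of_segment_subset (segment_eq_Icc hab.le).subset
  have hmul : (b - a) * c ≤ 0 := by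
    simpa using hmax.localize.hasFDerivWithinAt_nonpos hf.hasFDerivWithinAt hcone
  exact nonpos_of_mul_nonpos_right hmul (sub_pos.2 hab)

lemma hasDerivAt_deriv_of_contDiffAt_two {f : ℝ → ℝ} {x : ℝ} (hf : ContDiffAt ℝ 2 f x) :
    HasDerivAt (deriv f) (iteratedDeriv 2 f x) x := by
  rw [iteratedDeriv_succ, iteratedDeriv_one]
  exact ((hf.derivWithin (m := 1) (by norm_num)).differentiableAt one_ne_zero).hasDerivAt

lemma hasDerivAt_half_mul_sub_sq (m x₀ x : ℝ) :
    HasDerivAt (fun x => m / 2 * (x - x₀) ^ 2) (m * (x - x₀)) x := by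
  refine ((((hasDerivAt_id' x).sub_const x₀).fun_pow 2).const_mul (m / 2)).congr_deriv ?_
  push_cast
  ring

lemma convexOn_sub_quadratic_of_le_iteratedDeriv_two {D : Set ℝ} (hD : Convex ℝ D) {f : ℝ → ℝ}
    (hcont : ContinuousOn f D) (hf : ∀ x ∈ interior D, ContDiffAt ℝ 2 f x) {m : ℝ}
    (hm : ∀ x ∈ interior D, m ≤ iteratedDeriv 2 f x) (x₀ : ℝ) :
    ConvexOn ℝ D fun x => f x - m / 2 * (x - x₀) ^ 2 := by
  refine convexOn_of_hasDerivWithinAt2_nonneg (f' := fun x => deriv f x - m * (x - x₀))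
    (f'' := fun x => iteratedDeriv 2 f x - m) hD (hcont.sub (by fun_prop)) ?_ ?_ ?_
  · exact fun x hx => (((hf x hx).differentiableAt two_ne_zero).hasDerivAt.fun_sub
      (hasDerivAt_half_mul_sub_sq m x₀ x)).hasDerivWithinAt
  · intro x hx
    have hlin := ((hasDerivAt_id' x).sub_const x₀).const_mul m
    simpa using ((hasDerivAt_deriv_of_contDiffAt_two (hf x hx)).fun_sub hlin).hasDerivWithinAt
  · exact fun x hx => sub_nonneg.2 (hm x hx)

lemma add_mul_sub_le_deriv_of_le_iteratedDeriv_two {f : ℝ → ℝ} {a b c m s : ℝ}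
    (hcont : ContinuousOn f (Icc a b)) (ha : HasDerivWithinAt f c (Icc a b) a)
    (hf : ∀ x ∈ Ioo a b, ContDiffAt ℝ 2 f x) (hm : ∀ x ∈ Ioo a b, m ≤ iteratedDeriv 2 f x)
    (hs : s ∈ Ioo a b) : c + m * (s - a) ≤ deriv f s := by
  have hconv := convexOn_sub_quadratic_of_le_iteratedDeriv_two (convex_Icc a b) hcont
    (by simpa only [interior_Icc] using hf) (by simpa only [interior_Icc] using hm) a
  have hleft := ha.fun_sub (hasDerivAt_half_mul_sub_sq m a a).hasDerivWithinAt
  have hright := ((hf s hs).differentiableAt two_ne_zero).hasDerivAt.fun_sub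
    (hasDerivAt_half_mul_sub_sq m a s)
  have haI : a ∈ Icc a b := left_mem_Icc.2 (hs.1.trans hs.2).le
  have hsI : s ∈ Icc a b := Ioo_subset_Icc_self hs
  linarith [(hconv.le_slope_of_hasDerivWithinAt haI hsI hs.1 hleft).trans
    (hconv.slope_le_of_hasDerivAt haI hsI hs.1 hright)]

lemma mul_sq_le_second_difference_of_le_iteratedDeriv_two {f : ℝ → ℝ} (hf : ContDiff ℝ 2 f)
    {m : ℝ} (hm : ∀ x, m ≤ iteratedDeriv 2 f x) (x d : ℝ) :
    m * d ^ 2 ≤ f (x + d) + f (x - d) - 2 * f x := by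
  have hconv := convexOn_sub_quadratic_of_le_iteratedDeriv_two convex_univ
    hf.continuous.continuousOn (fun x _ => hf.contDiffAt) (fun x _ => hm x) x
  have hmid := hconv.2 (mem_univ (x + d)) (mem_univ (x - d)) one_half_pos.le one_half_pos.le
    (add_halves 1)
  have hcenter : (1 / 2 : ℝ) • (x + d) + (1 / 2 : ℝ) • (x - d) = x := by
    simp only [smul_eq_mul]
    ring
  rw [hcenter] at hmid
  simp only [smul_eq_mul] at hmid
  linarith

lemma iteratedDeriv_two_le_of_second_difference_le {f : ℝ → ℝ} {x M : ℝ}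
    (hf : ContDiffAt ℝ 2 f x) (hM : ∀ d, f (x + d) + f (x - d) - 2 * f x ≤ M * d ^ 2) :
    iteratedDeriv 2 f x ≤ M := by
  have hplus : ContDiffAt ℝ 2 (fun d => f (x + d)) 0 := by
    refine ContDiffAt.comp 0 ?_ (by fun_prop)
    simpa using hf
  have hminus : ContDiffAt ℝ 2 (fun d => f (x - d)) 0 := by
    refine ContDiffAt.comp 0 ?_ (by fun_prop)
    simpa using hf
  have hsq : ContDiffAt ℝ 2 (fun d : ℝ => M * d ^ 2) 0 := by fun_prop
  have hmax : IsLocalMax (fun d => f (x + d) + f (x - d) - M * d ^ 2) 0 :=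
    Eventually.of_forall fun d => by
      simp only [add_zero, sub_zero]
      linarith [hM d]
  have hderiv := iteratedDeriv_two_nonpos_of_isLocalMax hmax
    ((hplus.add hminus).sub hsq).continuousAt
  have hsq_deriv : iteratedDeriv 2 (fun d : ℝ => M * d ^ 2) 0 = 2 * M := by
    simp [mul_comm]
  rw [iteratedDeriv_fun_sub (hplus.add hminus) hsq, iteratedDeriv_fun_add hplus hminus,
    iteratedDeriv_comp_const_add, iteratedDeriv_comp_const_sub, hsq_deriv] at hderiv
  simp only [add_zero, sub_zero, even_two, Even.neg_pow, one_pow, one_smul] at hderiv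
  linarith

end SecondDerivative

section PeriodicDatum

lemma periodic_iteratedDeriv {E : Type*} [NormedAddCommGroup E] [NormedSpace ℝ E] {f : ℝ → E}
    {T : ℝ} (hf : f.Periodic T) (n : ℕ) : (iteratedDeriv n f).Periodic T := fun x => by
  rw [← congrFun (iteratedDeriv_comp_add_const n f T) x, hf.funext]

lemma exists_nnnorm_iteratedDeriv_le_of_periodic {E : Type*} [NormedAddCommGroup E]
    [NormedSpace ℝ E] {f : ℝ → E} {T : ℝ} (hT : T ≠ 0) (hper : f.Periodic T) {n : ℕ}
    (hf : ContDiff ℝ n f) : ∃ K : ℝ≥0, ∀ x, ‖iteratedDeriv n f x‖₊ ≤ K := by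
  obtain ⟨K, hK⟩ := ((periodic_iteratedDeriv hper n).isBounded_of_continuous hT
    (hf.continuous_iteratedDeriv n le_rfl)).exists_norm_le
  exact ⟨K.toNNReal, fun x => NNReal.le_toNNReal_of_coe_le (hK _ (mem_range_self x))⟩

lemma exists_lipschitzWith_of_contDiff_one_of_periodic {E : Type*} [NormedAddCommGroup E]
    [NormedSpace ℝ E] {f : ℝ → E} {T : ℝ} (hT : T ≠ 0) (hper : f.Periodic T)
    (hf : ContDiff ℝ 1 f) : ∃ K : ℝ≥0, LipschitzWith K f := by
  obtain ⟨K, hK⟩ := exists_nnnorm_iteratedDeriv_le_of_periodic hT hper (n := 1) (mod_cast hf)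
  rw [iteratedDeriv_one] at hK
  exact ⟨K, lipschitzWith_of_nnnorm_deriv_le (hf.differentiable one_ne_zero) hK⟩

lemma exists_abs_second_difference_le_of_contDiff_two_of_periodic {f : ℝ → ℝ} {T : ℝ} (hT : T ≠ 0)
    (hper : f.Periodic T) (hf : ContDiff ℝ 2 f) :
    ∃ K : ℝ≥0, ∀ x d, |f (x + d) + f (x - d) - 2 * f x| ≤ K * d ^ 2 := by
  obtain ⟨K, hK⟩ := exists_nnnorm_iteratedDeriv_le_of_periodic hT hper (n := 2) (mod_cast hf)
  have hK' : ∀ x, |iteratedDeriv 2 f x| ≤ K := hK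
  refine ⟨K, fun x d => abs_le.2 ⟨?_, ?_⟩⟩
  · linarith [mul_sq_le_second_difference_of_le_iteratedDeriv_two hf
      (fun x => (abs_le.1 (hK' x)).1) x d]
  · have hneg := mul_sq_le_second_difference_of_le_iteratedDeriv_two (m := -K) hf.neg
      (fun x => by simpa using (abs_le.1 (hK' x)).2) x d
    linarith

end PeriodicDatum

section InsulatedStrip

/-- Harmonic functions `W s t` on the strip `[a, b] × ℝ` that are `T`-periodic in `t` and satisfy
the Neumann condition `∂W/∂s = 0` on the side `s = a`: the insulated problem in logarithmic polar
coordinates. Regularity is imposed only separately in each variable, and only in the interior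
apart from the continuity of `W` and the one-sided derivative at `s = a`. -/
structure InsulatedOnStrip (a b T : ℝ) (W : ℝ → ℝ → ℝ) : Prop where
  continuousOn : ContinuousOn (Function.uncurry W) (Icc a b ×ˢ univ)
  periodic : ∀ s, (W s).Periodic T
  hasDerivWithinAt_left : ∀ t, HasDerivWithinAt (fun s => W s t) 0 (Icc a b) a
  contDiffAt_fst : ∀ s ∈ Ioo a b, ∀ t, ContDiffAt ℝ 2 (fun s => W s t) s
  contDiff_snd : ∀ s ∈ Ioo a b, ContDiff ℝ 2 (W s)
  iteratedDeriv_two_add : ∀ s ∈ Ioo a b, ∀ t,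
    iteratedDeriv 2 (fun s => W s t) s + iteratedDeriv 2 (W s) t = 0

/-- A maximum at `s = a` is excluded by the sign of the Neumann derivative, one in the interior by
the sign of the Laplacian. -/
lemma exists_le_right_side_of_strictly_subharmonic {a b T : ℝ} {W : ℝ → ℝ → ℝ} (hT : 0 < T)
    (hcont : ContinuousOn (Function.uncurry W) (Icc a b ×ˢ univ))
    (hper : ∀ s, (W s).Periodic T)
    (hleft : ∀ t, ∃ c > 0, HasDerivWithinAt (fun s => W s t) c (Icc a b) a)
    (hsub : ∀ s ∈ Ioo a b, ∀ t,
      0 < iteratedDeriv 2 (fun s => W s t) s + iteratedDeriv 2 (W s) t)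
    {s : ℝ} (hs : s ∈ Icc a b) (t : ℝ) : ∃ t₀, W s t ≤ W b t₀ := by
  obtain ⟨⟨s₀, t₀⟩, ⟨hs₀, -⟩, hmax_cell⟩ :=
    (isCompact_Icc.prod isCompact_Icc).exists_isMaxOn (s := Icc a b ×ˢ Icc 0 T)
      ⟨(s, 0), hs, left_mem_Icc.2 hT.le⟩ (hcont.mono (prod_mono_right (subset_univ _)))
  simp only at hs₀
  have hmax : ∀ s ∈ Icc a b, ∀ t, W s t ≤ W s₀ t₀ := fun s hs t => by
    obtain ⟨t', ht', heq⟩ := (hper s).exists_mem_Ico₀ hT t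
    exact heq ▸ hmax_cell (mk_mem_prod hs (Ico_subset_Icc_self ht'))
  rcases eq_or_lt_of_le hs₀.2 with rfl | hs₀b
  · exact ⟨t₀, hmax s hs t⟩
  rcases eq_or_lt_of_le hs₀.1 with rfl | has₀
  · obtain ⟨c, hc, hderiv⟩ := hleft t₀
    exact absurd (nonpos_of_hasDerivWithinAt_left_of_isMaxOn hs₀b hderiv fun s hs => hmax s hs t₀)
      hc.not_ge
  have hnhds : Icc a b ∈ 𝓝 s₀ := Icc_mem_nhds has₀ hs₀b
  have hcontAt : ContinuousAt (Function.uncurry W) (s₀, t₀) :=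
    hcont.continuousAt (prod_mem_nhds hnhds univ_mem)
  have hfst : iteratedDeriv 2 (fun s => W s t₀) s₀ ≤ 0 :=
    iteratedDeriv_two_nonpos_of_isLocalMax
      (by filter_upwards [hnhds] with s hs using hmax s hs t₀)
      (hcontAt.comp (f := fun s => (s, t₀)) (by fun_prop))
  have hsnd : iteratedDeriv 2 (W s₀) t₀ ≤ 0 :=
    iteratedDeriv_two_nonpos_of_isLocalMax (Eventually.of_forall (hmax s₀ hs₀))
      (hcontAt.comp (f := fun t => (s₀, t)) (by fun_prop))
  linarith [hsub s₀ ⟨has₀, hs₀b⟩ t₀]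

namespace InsulatedOnStrip

variable {a b T : ℝ} {W V : ℝ → ℝ → ℝ}

lemma neg (h : InsulatedOnStrip a b T W) : InsulatedOnStrip a b T fun s t => -W s t where
  continuousOn := h.continuousOn.neg
  periodic s t := congrArg Neg.neg (h.periodic s t)
  hasDerivWithinAt_left t := by simpa using (h.hasDerivWithinAt_left t).fun_neg
  contDiffAt_fst s hs t := (h.contDiffAt_fst s hs t).neg
  contDiff_snd s hs := (h.contDiff_snd s hs).neg
  iteratedDeriv_two_add s hs t := by
    rw [iteratedDeriv_fun_neg, iteratedDeriv_fun_neg, ← neg_add, h.iteratedDeriv_two_add s hs t,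
      neg_zero]

lemma add (h : InsulatedOnStrip a b T W) (k : InsulatedOnStrip a b T V) :
    InsulatedOnStrip a b T fun s t => W s t + V s t where
  continuousOn := h.continuousOn.add k.continuousOn
  periodic s := (h.periodic s).add (k.periodic s)
  hasDerivWithinAt_left t := by
    simpa using (h.hasDerivWithinAt_left t).fun_add (k.hasDerivWithinAt_left t)
  contDiffAt_fst s hs t := (h.contDiffAt_fst s hs t).add (k.contDiffAt_fst s hs t)
  contDiff_snd s hs := (h.contDiff_snd s hs).add (k.contDiff_snd s hs)
  iteratedDeriv_two_add s hs t := by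
    rw [iteratedDeriv_fun_add (h.contDiffAt_fst s hs t) (k.contDiffAt_fst s hs t),
      iteratedDeriv_fun_add (h.contDiff_snd s hs).contDiffAt (k.contDiff_snd s hs).contDiffAt]
    linarith [h.iteratedDeriv_two_add s hs t, k.iteratedDeriv_two_add s hs t]

lemma sub (h : InsulatedOnStrip a b T W) (k : InsulatedOnStrip a b T V) :
    InsulatedOnStrip a b T fun s t => W s t - V s t := by
  simpa only [sub_eq_add_neg] using h.add k.neg

lemma comp_add_const (h : InsulatedOnStrip a b T W) (d : ℝ) :
    InsulatedOnStrip a b T fun s t => W s (t + d) where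
  continuousOn := h.continuousOn.comp (f := fun p : ℝ × ℝ => (p.1, p.2 + d)) (by fun_prop)
    fun _ hp => mk_mem_prod hp.1 (mem_univ _)
  periodic s := (h.periodic s).add_const d
  hasDerivWithinAt_left t := h.hasDerivWithinAt_left (t + d)
  contDiffAt_fst s hs t := h.contDiffAt_fst s hs (t + d)
  contDiff_snd s hs := (h.contDiff_snd s hs).comp (by fun_prop)
  iteratedDeriv_two_add s hs t := by
    rw [iteratedDeriv_comp_add_const]
    exact h.iteratedDeriv_two_add s hs (t + d)

lemma le_of_le_right_side (h : InsulatedOnStrip a b T W) (hT : 0 < T) {M : ℝ}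
    (hM : ∀ t, W b t ≤ M) {s : ℝ} (hs : s ∈ Icc a b) (t : ℝ) : W s t ≤ M := by
  refine le_of_forall_pos_le_add fun η hη => ?_
  -- The perturbation `η * exp (s - b)` makes both the Laplacian and the Neumann derivative
  -- strictly positive.
  let barrier : ℝ → ℝ := fun s => η * Real.exp (s - b)
  have hbarrier_pos : ∀ s, 0 < barrier s := fun s => mul_pos hη (Real.exp_pos _)
  have hbarrier_deriv : ∀ s, HasDerivAt barrier (barrier s) s := fun s => by
    simpa using ((hasDerivAt_id' s).sub_const b).exp.const_mul η
  have hbarrier_deriv2 : iteratedDeriv 2 barrier = barrier := by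
    have hderiv : deriv barrier = barrier := funext fun s => (hbarrier_deriv s).deriv
    rw [iteratedDeriv_succ, iteratedDeriv_one, hderiv, hderiv]
  have hbarrier_contDiff : ContDiff ℝ 2 barrier := by fun_prop
  obtain ⟨t₀, ht₀⟩ := exists_le_right_side_of_strictly_subharmonic hT
    (W := fun s t => W s t + barrier s)
    (h.continuousOn.add (hbarrier_contDiff.continuous.comp continuous_fst).continuousOn)
    (fun s t => congrArg (· + barrier s) (h.periodic s t))
    (fun t => ⟨barrier a, hbarrier_pos a, by
      simpa using (h.hasDerivWithinAt_left t).fun_add (hbarrier_deriv a).hasDerivWithinAt⟩)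
    (fun s hs t => by
      rw [iteratedDeriv_fun_add (h.contDiffAt_fst s hs t) hbarrier_contDiff.contDiffAt,
        iteratedDeriv_fun_add (h.contDiff_snd s hs).contDiffAt contDiffAt_const, hbarrier_deriv2]
      simp only [iteratedDeriv_const, OfNat.ofNat_ne_zero, if_false]
      linarith [h.iteratedDeriv_two_add s hs t, hbarrier_pos s])
    hs t
  calc W s t ≤ W s t + barrier s := le_add_of_nonneg_right (hbarrier_pos s).le
    _ ≤ W b t₀ + barrier b := ht₀
    _ = W b t₀ + η := by simp [barrier]
    _ ≤ M + η := by gcongr; exact hM t₀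

lemma lipschitzWith_snd (h : InsulatedOnStrip a b T W) (hT : 0 < T) {K : ℝ≥0}
    (hK : LipschitzWith K (W b)) {s : ℝ} (hs : s ∈ Icc a b) : LipschitzWith K (W s) := by
  refine LipschitzWith.of_le_add_mul K fun t t' => ?_
  have hshift := ((h.comp_add_const (t - t')).sub h).le_of_le_right_side hT (M := K * dist t t')
    (fun x => by
      have hlip := hK.le_add_mul (x + (t - t')) x
      rw [Real.dist_eq] at hlip ⊢
      rw [add_sub_cancel_left] at hlip
      linarith) hs t'
  rw [add_sub_cancel] at hshift
  linarith

lemma second_difference_le (h : InsulatedOnStrip a b T W) (hT : 0 < T) {M : ℝ}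
    (hM : ∀ t d, W b (t + d) + W b (t - d) - 2 * W b t ≤ M * d ^ 2)
    {s : ℝ} (hs : s ∈ Icc a b) (t d : ℝ) : W s (t + d) + W s (t - d) - 2 * W s t ≤ M * d ^ 2 := by
  have hcomb := ((h.comp_add_const d).add (h.comp_add_const (-d))).sub (h.add h)
  simp only [← sub_eq_add_neg, ← two_mul] at hcomb
  exact hcomb.le_of_le_right_side hT (fun t => hM t d) hs t

lemma neg_mul_sub_le_deriv_fst (h : InsulatedOnStrip a b T W) (hT : 0 < T) {M : ℝ}
    (hM : ∀ t d, W b (t + d) + W b (t - d) - 2 * W b t ≤ M * d ^ 2)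
    {s : ℝ} (hs : s ∈ Ioo a b) (t : ℝ) : -(M * (s - a)) ≤ deriv (fun s => W s t) s := by
  have hfst : ∀ x ∈ Ioo a b, -M ≤ iteratedDeriv 2 (fun s => W s t) x := fun x hx => by
    have hsnd : iteratedDeriv 2 (W x) t ≤ M :=
      iteratedDeriv_two_le_of_second_difference_le (h.contDiff_snd x hx).contDiffAt
        (h.second_difference_le hT hM (Ioo_subset_Icc_self hx) t)
    linarith [h.iteratedDeriv_two_add x hx t]
  have hcont : ContinuousOn (fun s => W s t) (Icc a b) :=
    h.continuousOn.comp (f := fun s => (s, t)) (by fun_prop) fun _ hx => mk_mem_prod hx (mem_univ _)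
  linarith [add_mul_sub_le_deriv_of_le_iteratedDeriv_two hcont (h.hasDerivWithinAt_left t)
    (fun x hx => h.contDiffAt_fst x hx t) hfst hs]

lemma abs_deriv_fst_le (h : InsulatedOnStrip a b T W) (hT : 0 < T) {M : ℝ}
    (hM : ∀ t d, |W b (t + d) + W b (t - d) - 2 * W b t| ≤ M * d ^ 2)
    {s : ℝ} (hs : s ∈ Ioo a b) (t : ℝ) : |deriv (fun s => W s t) s| ≤ M * (s - a) := by
  have hlower := h.neg_mul_sub_le_deriv_fst hT (fun t d => (abs_le.1 (hM t d)).2) hs t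
  have hupper := h.neg.neg_mul_sub_le_deriv_fst hT (M := M)
    (fun t d => by linarith [(abs_le.1 (hM t d)).1]) hs t
  rw [deriv.fun_neg] at hupper
  exact abs_le.2 ⟨hlower, neg_le_neg_iff.1 hupper⟩

end InsulatedOnStrip

end InsulatedStrip

section LogPolar

lemma contDiff_dir {n : WithTop ℕ∞} : ContDiff ℝ n dir := by
  refine (EuclideanSpace.equiv (Fin 2) ℝ).symm.contDiff.comp (contDiff_pi.2 fun i => ?_)
  fin_cases i
  exacts [Real.contDiff_cos, Real.contDiff_sin]

lemma dir_periodic : dir.Periodic (2 * π) := fun t => by simp [dir]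

lemma dir_add_pi_div_two_add_pi_div_two (t : ℝ) : dir (t + π / 2 + π / 2) = -dir t := by
  ext i
  fin_cases i <;> simp [dir, Real.cos_add_pi_div_two, Real.sin_add_pi_div_two]

lemma hasDerivAt_dir (t : ℝ) : HasDerivAt dir (dir (t + π / 2)) t := by
  refine (EuclideanSpace.equiv (Fin 2) ℝ).symm.hasFDerivAt.comp_hasDerivAt t
    (hasDerivAt_pi.2 fun i => ?_)
  fin_cases i
  · simpa [Real.cos_add_pi_div_two] using Real.hasDerivAt_cos t
  · simpa [Real.sin_add_pi_div_two] using Real.hasDerivAt_sin t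

lemma norm_dir (t : ℝ) : ‖dir t‖ = 1 := by simp [dir, EuclideanSpace.norm_eq]

lemma norm_smul_dir_ang (x : EuclideanSpace ℝ (Fin 2)) : ‖x‖ • dir (ang x) = x := by
  have hnorm : ‖(x 0 + x 1 * Complex.I : ℂ)‖ = ‖x‖ :=
    Complex.orthonormalBasisOneI.repr.symm.norm_map x
  ext i
  fin_cases i
  · simpa [dir, ang, hnorm] using Complex.norm_mul_cos_arg (x 0 + x 1 * Complex.I)
  · simpa [dir, ang, hnorm] using Complex.norm_mul_sin_arg (x 0 + x 1 * Complex.I)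

lemma orthonormal_dir (t : ℝ) : Orthonormal ℝ ![dir t, dir (t + π / 2)] := by
  refine ⟨fun i => ?_, fun i j hij => ?_⟩
  · fin_cases i <;> simp [norm_dir]
  · fin_cases i <;> fin_cases j <;>
      simp_all [dir, PiLp.inner_apply, Real.cos_add_pi_div_two, Real.sin_add_pi_div_two, mul_comm]

/-- The orthonormal frame of `ℝ²` formed by the radial direction `dir t` and the angular
direction `dir (t + π / 2)`. -/
noncomputable def polarFrame (t : ℝ) : OrthonormalBasis (Fin 2) ℝ (EuclideanSpace ℝ (Fin 2)) :=
  (basisOfOrthonormalOfCardEqFinrank (orthonormal_dir t) (by simp)).toOrthonormalBasis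
    (by simpa using orthonormal_dir t)

lemma coe_polarFrame (t : ℝ) : ⇑(polarFrame t) = ![dir t, dir (t + π / 2)] := by
  simp [polarFrame]

lemma laplacian_eq_sum_orthonormalBasis {d : ℕ} {ι : Type*} [Fintype ι]
    (v : OrthonormalBasis ι ℝ (EuclideanSpace ℝ (Fin d))) (f : EuclideanSpace ℝ (Fin d) → ℝ)
    (x : EuclideanSpace ℝ (Fin d)) :
    laplacian f x = ∑ i, iteratedFDeriv ℝ 2 f x ![v i, v i] := by
  have hbases := (InnerProductSpace.laplacian_eq_iteratedFDeriv_orthonormalBasis f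
    (EuclideanSpace.basisFun (Fin d) ℝ)).symm.trans
    (InnerProductSpace.laplacian_eq_iteratedFDeriv_orthonormalBasis f v)
  simpa [laplacian] using congrFun hbases x

lemma norm_gradient_le_sum_orthonormalBasis {E ι : Type*} [NormedAddCommGroup E]
    [InnerProductSpace ℝ E] [CompleteSpace E] [Fintype ι] (v : OrthonormalBasis ι ℝ E) (f : E → ℝ)
    (x : E) : ‖gradient f x‖ ≤ ∑ i, |fderiv ℝ f x (v i)| := by
  calc ‖gradient f x‖ = ‖∑ i, ⟪v i, gradient f x⟫_ℝ • v i‖ := by rw [v.sum_repr']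
    _ ≤ ∑ i, ‖⟪v i, gradient f x⟫_ℝ • v i‖ := norm_sum_le _ _
    _ = ∑ i, |fderiv ℝ f x (v i)| := by
        refine Finset.sum_congr rfl fun i _ => ?_
        rw [norm_smul, v.norm_eq_one, mul_one, Real.norm_eq_abs, real_inner_comm, gradient,
          InnerProductSpace.toDual_symm_apply]

/-- The point of `ℝ²` with logarithmic polar coordinates `(s, t)`, that is `exp (s + i t)`: these
coordinates are conformal, so they transport harmonic functions on annuli to harmonic functions on
strips. -/
noncomputable def logPolar (s t : ℝ) : EuclideanSpace ℝ (Fin 2) :=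
  Real.exp s • dir t

lemma norm_logPolar (s t : ℝ) : ‖logPolar s t‖ = Real.exp s := by
  rw [logPolar, norm_smul, norm_dir, mul_one, Real.norm_eq_abs, Real.abs_exp]

lemma logPolar_log {r : ℝ} (hr : 0 < r) (t : ℝ) : logPolar (Real.log r) t = r • dir t := by
  rw [logPolar, Real.exp_log hr]

lemma logPolar_log_norm_ang {x : EuclideanSpace ℝ (Fin 2)} (hx : x ≠ 0) :
    logPolar (Real.log ‖x‖) (ang x) = x := by
  rw [logPolar_log (norm_pos_iff.2 hx), norm_smul_dir_ang]

lemma contDiff_logPolar {n : WithTop ℕ∞} : ContDiff ℝ n (Function.uncurry logPolar) :=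
  (Real.contDiff_exp.comp contDiff_fst).smul (contDiff_dir.comp contDiff_snd)

lemma contDiff_logPolar_fst {n : WithTop ℕ∞} (t : ℝ) : ContDiff ℝ n fun s => logPolar s t :=
  contDiff_logPolar.comp (contDiff_prodMk_left t)

lemma contDiff_logPolar_snd {n : WithTop ℕ∞} (s : ℝ) : ContDiff ℝ n (logPolar s) :=
  contDiff_logPolar.comp (contDiff_prodMk_right s)

lemma hasDerivAt_logPolar_fst (s t : ℝ) : HasDerivAt (fun s => logPolar s t) (logPolar s t) s :=
  (Real.hasDerivAt_exp s).smul_const (dir t)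

lemma hasDerivAt_logPolar_snd (s t : ℝ) : HasDerivAt (logPolar s) (logPolar s (t + π / 2)) t :=
  (hasDerivAt_dir t).const_smul (Real.exp s)

lemma deriv_logPolar_fst (t : ℝ) :
    (deriv fun s => logPolar s t) = fun s => logPolar s t :=
  funext fun s => (hasDerivAt_logPolar_fst s t).deriv

lemma deriv_logPolar_snd (s : ℝ) : deriv (logPolar s) = fun t => logPolar s (t + π / 2) :=
  funext fun t => (hasDerivAt_logPolar_snd s t).deriv

lemma iteratedDeriv_two_logPolar_fst (s t : ℝ) :
    iteratedDeriv 2 (fun s => logPolar s t) s = logPolar s t := by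
  rw [iteratedDeriv_succ, iteratedDeriv_one, deriv_logPolar_fst, deriv_logPolar_fst]

lemma iteratedDeriv_two_logPolar_snd (s t : ℝ) :
    iteratedDeriv 2 (logPolar s) t = -logPolar s t := by
  rw [iteratedDeriv_succ, iteratedDeriv_one, deriv_logPolar_snd, deriv_comp_add_const,
    deriv_logPolar_snd]
  simp only [logPolar, dir_add_pi_div_two_add_pi_div_two, smul_neg]

lemma iteratedDeriv_two_comp_logPolar_add {u : EuclideanSpace ℝ (Fin 2) → ℝ} {s t : ℝ}
    (hu : ContDiffAt ℝ 2 u (logPolar s t)) :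
    iteratedDeriv 2 (fun s => u (logPolar s t)) s + iteratedDeriv 2 (fun t => u (logPolar s t)) t =
      Real.exp s ^ 2 * laplacian u (logPolar s t) := by
  have hscale : ∀ v : EuclideanSpace ℝ (Fin 2),
      iteratedFDeriv ℝ 2 u (logPolar s t) (fun _ => Real.exp s • v) =
        Real.exp s ^ 2 * iteratedFDeriv ℝ 2 u (logPolar s t) ![v, v] := fun v => by
    have hpair : (fun _ => Real.exp s • v) = fun i => Real.exp s • ![v, v] i := by
      ext i : 1
      fin_cases i <;> rfl
    rw [hpair, ContinuousMultilinearMap.map_smul_univ]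
    simp [sq]
  have hfst := iteratedDeriv_vcomp_two (f := fun s => logPolar s t) (x := s) hu
    (contDiff_logPolar_fst (n := 2) t).contDiffAt
  have hsnd := iteratedDeriv_vcomp_two hu (contDiff_logPolar_snd (n := 2) s).contDiffAt
  rw [deriv_logPolar_fst, iteratedDeriv_two_logPolar_fst] at hfst
  rw [deriv_logPolar_snd, iteratedDeriv_two_logPolar_snd, map_neg] at hsnd
  have hlap := laplacian_eq_sum_orthonormalBasis (polarFrame t) u (logPolar s t)
  simp only [Fin.sum_univ_two, coe_polarFrame, Matrix.cons_val_zero, Matrix.cons_val_one] at hlap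
  refine (congrArg₂ (· + ·) hfst hsnd).trans ?_
  rw [hlap, mul_add, ← hscale, ← hscale]
  simp only [logPolar]
  ring

lemma deriv_comp_logPolar_fst {u : EuclideanSpace ℝ (Fin 2) → ℝ} {s t : ℝ}
    (hu : DifferentiableAt ℝ u (logPolar s t)) :
    deriv (fun s => u (logPolar s t)) s =
      Real.exp s * fderiv ℝ u (logPolar s t) (polarFrame t 0) := by
  refine (hu.hasFDerivAt.comp_hasDerivAt s (hasDerivAt_logPolar_fst s t)).deriv.trans ?_
  rw [coe_polarFrame, Matrix.cons_val_zero, ← smul_eq_mul, ← map_smul, ← logPolar]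

lemma deriv_comp_logPolar_snd {u : EuclideanSpace ℝ (Fin 2) → ℝ} {s t : ℝ}
    (hu : DifferentiableAt ℝ u (logPolar s t)) :
    deriv (fun t => u (logPolar s t)) t =
      Real.exp s * fderiv ℝ u (logPolar s t) (polarFrame t 1) := by
  refine (hu.hasFDerivAt.comp_hasDerivAt t (hasDerivAt_logPolar_snd s t)).deriv.trans ?_
  rw [coe_polarFrame, Matrix.cons_val_one, Matrix.cons_val_fin_one, ← smul_eq_mul, ← map_smul,
    ← logPolar]

lemma exp_mul_norm_gradient_le {u : EuclideanSpace ℝ (Fin 2) → ℝ} {s t : ℝ}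
    (hu : DifferentiableAt ℝ u (logPolar s t)) :
    Real.exp s * ‖gradient u (logPolar s t)‖ ≤
      |deriv (fun s => u (logPolar s t)) s| + |deriv (fun t => u (logPolar s t)) t| := by
  rw [deriv_comp_logPolar_fst hu, deriv_comp_logPolar_snd hu, abs_mul, abs_mul, Real.abs_exp,
    ← mul_add, ← Fin.sum_univ_two fun i => |fderiv ℝ u (logPolar s t) (polarFrame t i)|]
  gcongr
  exact norm_gradient_le_sum_orthonormalBasis (polarFrame t) u (logPolar s t)

end LogPolar

section Annulus

lemma isOpen_setOf_lt_norm_lt {E : Type*} [SeminormedAddCommGroup E] (r R : ℝ) :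
    IsOpen {x : E | r < ‖x‖ ∧ ‖x‖ < R} :=
  (isOpen_lt continuous_const continuous_norm).inter (isOpen_lt continuous_norm continuous_const)

variable {r₀ R : ℝ} {u : EuclideanSpace ℝ (Fin 2) → ℝ}

lemma insulatedOnStrip_comp_logPolar (hr₀ : 0 < r₀) (hR : 0 < R)
    (hu : HarmonicOnSet u {x | r₀ < ‖x‖ ∧ ‖x‖ < R})
    (hcont : ContinuousOn u {x | r₀ ≤ ‖x‖ ∧ ‖x‖ ≤ R})
    (hdiff : ∀ x, ‖x‖ = r₀ → DifferentiableWithinAt ℝ u {y | r₀ ≤ ‖y‖ ∧ ‖y‖ ≤ R} x)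
    (hneu : ∀ x, ‖x‖ = r₀ → fderivWithin ℝ u {y | r₀ ≤ ‖y‖ ∧ ‖y‖ ≤ R} x (‖x‖⁻¹ • x) = 0) :
    InsulatedOnStrip (Real.log r₀) (Real.log R) (2 * π) fun s t => u (logPolar s t) := by
  have hmem_closed : ∀ s ∈ Icc (Real.log r₀) (Real.log R), ∀ t,
      logPolar s t ∈ {x | r₀ ≤ ‖x‖ ∧ ‖x‖ ≤ R} := fun s hs t => by
    rw [mem_ofPred_eq, norm_logPolar]
    exact ⟨(Real.log_le_iff_le_exp hr₀).1 hs.1, (Real.le_log_iff_exp_le hR).1 hs.2⟩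
  have hmem_open : ∀ s ∈ Ioo (Real.log r₀) (Real.log R), ∀ t,
      logPolar s t ∈ {x | r₀ < ‖x‖ ∧ ‖x‖ < R} := fun s hs t => by
    rw [mem_ofPred_eq, norm_logPolar]
    exact ⟨(Real.log_lt_iff_lt_exp hr₀).1 hs.1, (Real.lt_log_iff_exp_lt hR).1 hs.2⟩
  have hsmooth : ∀ s ∈ Ioo (Real.log r₀) (Real.log R), ∀ t, ContDiffAt ℝ 2 u (logPolar s t) :=
    fun s hs t => hu.1.contDiffAt ((isOpen_setOf_lt_norm_lt r₀ R).mem_nhds (hmem_open s hs t))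
  refine ⟨?_, ?_, fun t => ?_, fun s hs t => ?_, fun s hs => ?_, fun s hs t => ?_⟩
  · exact hcont.comp (contDiff_logPolar (n := 0)).continuous.continuousOn
      fun p hp => hmem_closed p.1 hp.1 p.2
  · exact fun s t => congrArg (fun v => u (Real.exp s • v)) (dir_periodic t)
  · have hnorm : ‖logPolar (Real.log r₀) t‖ = r₀ := by rw [norm_logPolar, Real.exp_log hr₀]
    have hradial := hneu _ hnorm
    rw [map_smul, hnorm, smul_eq_zero_iff_right (inv_ne_zero hr₀.ne')] at hradial
    exact hradial ▸ (hdiff _ hnorm).hasFDerivWithinAt.comp_hasDerivWithinAt (Real.log r₀)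
      (hasDerivAt_logPolar_fst _ t).hasDerivWithinAt fun s hs => hmem_closed s hs t
  · exact (hsmooth s hs t).comp s (contDiff_logPolar_fst (n := 2) t).contDiffAt
  · exact contDiff_iff_contDiffAt.2 fun t =>
      (hsmooth s hs t).comp t (contDiff_logPolar_snd (n := 2) s).contDiffAt
  · rw [iteratedDeriv_two_comp_logPolar_add (hsmooth s hs t), hu.2 _ (hmem_open s hs t), mul_zero]

lemma norm_mul_norm_gradient_le (hr₀ : 0 < r₀)
    (hu : HarmonicOnSet u {x | r₀ < ‖x‖ ∧ ‖x‖ < R})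
    (hcont : ContinuousOn u {x | r₀ ≤ ‖x‖ ∧ ‖x‖ ≤ R})
    (hdiff : ∀ x, ‖x‖ = r₀ → DifferentiableWithinAt ℝ u {y | r₀ ≤ ‖y‖ ∧ ‖y‖ ≤ R} x)
    (hneu : ∀ x, ‖x‖ = r₀ → fderivWithin ℝ u {y | r₀ ≤ ‖y‖ ∧ ‖y‖ ≤ R} x (‖x‖⁻¹ • x) = 0)
    {M₁ M₂ : ℝ≥0} (hM₁ : LipschitzWith M₁ fun θ => u (R • dir θ))
    (hM₂ : ∀ θ d, |u (R • dir (θ + d)) + u (R • dir (θ - d)) - 2 * u (R • dir θ)| ≤ M₂ * d ^ 2)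
    {x : EuclideanSpace ℝ (Fin 2)} (hx₁ : r₀ < ‖x‖) (hx₂ : ‖x‖ < R) :
    ‖x‖ * ‖gradient u x‖ ≤ M₁ + M₂ * Real.log (‖x‖ / r₀) := by
  have hx : 0 < ‖x‖ := hr₀.trans hx₁
  have hstrip := insulatedOnStrip_comp_logPolar hr₀ (hx.trans hx₂) hu hcont hdiff hneu
  simp only [← logPolar_log (hx.trans hx₂)] at hM₁ hM₂
  have hs : Real.log ‖x‖ ∈ Ioo (Real.log r₀) (Real.log R) :=
    ⟨Real.log_lt_log hr₀ hx₁, Real.log_lt_log hx hx₂⟩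
  have hpolar : logPolar (Real.log ‖x‖) (ang x) = x := logPolar_log_norm_ang (norm_pos_iff.1 hx)
  have hangular : |deriv (fun t => u (logPolar (Real.log ‖x‖) t)) (ang x)| ≤ M₁ :=
    norm_deriv_le_of_lipschitz
      (hstrip.lipschitzWith_snd Real.two_pi_pos hM₁ (Ioo_subset_Icc_self hs))
  have hradial : |deriv (fun s => u (logPolar s (ang x))) (Real.log ‖x‖)| ≤
      M₂ * (Real.log ‖x‖ - Real.log r₀) :=
    hstrip.abs_deriv_fst_le Real.two_pi_pos hM₂ hs (ang x)
  have hdiffAt : DifferentiableAt ℝ u (logPolar (Real.log ‖x‖) (ang x)) := by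
    rw [hpolar]
    exact (hu.1.contDiffAt ((isOpen_setOf_lt_norm_lt r₀ R).mem_nhds
      ⟨hx₁, hx₂⟩)).differentiableAt two_ne_zero
  have hgrad := exp_mul_norm_gradient_le hdiffAt
  rw [Real.exp_log hx, hpolar] at hgrad
  rw [Real.log_div hx.ne' hr₀.ne']
  linarith

end Annulus

theorem insulated_two_dim_uniform_gradient_bound_general {r₀ R : ℝ} (hr₀ : 0 < r₀)
    {u : EuclideanSpace ℝ (Fin 2) → ℝ}
    (hu : HarmonicOnSet u {x | r₀ < ‖x‖ ∧ ‖x‖ < R})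
    (hcont : ContinuousOn u {x | r₀ ≤ ‖x‖ ∧ ‖x‖ ≤ R})
    (hdiff : ∀ x, ‖x‖ = r₀ → DifferentiableWithinAt ℝ u {y | r₀ ≤ ‖y‖ ∧ ‖y‖ ≤ R} x)
    (hneu : ∀ x, ‖x‖ = r₀ → fderivWithin ℝ u {y | r₀ ≤ ‖y‖ ∧ ‖y‖ ≤ R} x (‖x‖⁻¹ • x) = 0)
    {M₁ M₂ : ℝ≥0} (hM₁ : LipschitzWith M₁ fun θ => u (R • dir θ))
    (hM₂ : ∀ θ d, |u (R • dir (θ + d)) + u (R • dir (θ - d)) - 2 * u (R • dir θ)| ≤ M₂ * d ^ 2)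
    {x : EuclideanSpace ℝ (Fin 2)} (hx₁ : r₀ < ‖x‖) (hx₂ : ‖x‖ < R) :
    ‖gradient u x‖ ≤ (M₁ + M₂) / r₀ := by
  have hx : 0 < ‖x‖ := hr₀.trans hx₁
  have hlog : Real.log (‖x‖ / r₀) ≤ ‖x‖ / r₀ := Real.log_le_self (by positivity)
  have hone : 1 ≤ ‖x‖ / r₀ := (one_le_div hr₀).2 hx₁.le
  refine le_of_mul_le_mul_left ?_ hx
  calc ‖x‖ * ‖gradient u x‖ ≤ M₁ + M₂ * Real.log (‖x‖ / r₀) :=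
        norm_mul_norm_gradient_le hr₀ hu hcont hdiff hneu hM₁ hM₂ hx₁ hx₂
    _ ≤ M₁ * (‖x‖ / r₀) + M₂ * (‖x‖ / r₀) := by
        gcongr
        exact le_mul_of_one_le_right M₁.coe_nonneg hone
    _ = ‖x‖ * ((M₁ + M₂) / r₀) := by ring

theorem insulated_two_dim_uniform_gradient_bound {r₀ : ℝ} (hr₀ : 0 < r₀)
    (φ : EuclideanSpace ℝ (Fin 2) → ℝ)
    (hφ : ContDiff ℝ 2 fun θ : ℝ => φ (dir θ)) :
    ∃ C : ℝ, 0 < C ∧ ∀ ε ∈ Set.Ioc (0 : ℝ) 1, ∀ u : EuclideanSpace ℝ (Fin 2) → ℝ,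
      HarmonicOnSet u {x | r₀ < ‖x‖ ∧ ‖x‖ < r₀ + ε} →
      ContDiffOn ℝ 1 u {x | r₀ ≤ ‖x‖ ∧ ‖x‖ ≤ r₀ + ε} →
      (∀ x : EuclideanSpace ℝ (Fin 2), ‖x‖ = r₀ →
        fderivWithin ℝ u {y | r₀ ≤ ‖y‖ ∧ ‖y‖ ≤ r₀ + ε} x (‖x‖⁻¹ • x) = 0) →
      (∀ θ : ℝ, u ((r₀ + ε) • dir θ) = φ (dir θ)) →
      ∀ x : EuclideanSpace ℝ (Fin 2), r₀ < ‖x‖ → ‖x‖ < r₀ + ε →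
        ‖gradient u x‖ ≤ C := by
  have hper : (fun θ => φ (dir θ)).Periodic (2 * π) := dir_periodic.comp φ
  obtain ⟨M₁, hM₁⟩ := exists_lipschitzWith_of_contDiff_one_of_periodic
    Real.two_pi_pos.ne' hper (hφ.of_le one_le_two)
  obtain ⟨M₂, hM₂⟩ := exists_abs_second_difference_le_of_contDiff_two_of_periodic
    Real.two_pi_pos.ne' hper hφ
  refine ⟨(M₁ + M₂) / r₀ + 1, by positivity, fun ε hε u hu hu₁ hneu hbd x hx₁ hx₂ => ?_⟩
  have hdiff : ∀ y : EuclideanSpace ℝ (Fin 2), ‖y‖ = r₀ →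
      DifferentiableWithinAt ℝ u {y | r₀ ≤ ‖y‖ ∧ ‖y‖ ≤ r₀ + ε} y := fun y hy =>
    hu₁.differentiableOn one_ne_zero y ⟨hy.ge, hy.trans_le (by linarith [hε.1])⟩
  exact (insulated_two_dim_uniform_gradient_bound_general hr₀ hu hu₁.continuousOn hdiff hneu
    (by simpa only [hbd] using hM₁) (by simpa only [hbd] using hM₂) hx₁ hx₂).trans
      (le_add_of_nonneg_right zero_le_one)
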